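/- A minimal Lorentzian surface with pointwise 1-type Gauss map has it of the first kind (Proposition 3.3): in the setting of a minimal Lorentzian surface x(s,t) = α(s) + β(t) in null coordinates with I₁ × I₂ connected, suppose there exist a smooth function f : I₁ × I₂ → ℝ and a constant bivector C ∈ Λ²(ℝ⁴) such that Δν = f·(ν + C) at every point, where Δν := (2/m²)·∂²ν/∂s∂t. Then η₁ ∧ η₂ vanishes identically on I₁ × I₂; equivalently, ∂²ν/∂s∂t (s,t) is a scalar multiple of ν(s,t) at every point, so the Gauss map is of pointwise 1-type of the first kind (the constant vector C may be taken to be 0). -/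

import Mathlib

noncomputable section

/-- The Minkowski bilinear form on `ℝ⁴ = Fin 4 → ℝ`:
`B(v,w) = -v₀w₀ + v₁w₁ + v₂w₂ + v₃w₃`. -/
def B4 (v w : Fin 4 → ℝ) : ℝ :=
  -(v 0 * w 0) + v 1 * w 1 + v 2 * w 2 + v 3 * w 3

/-- The wedge product `v ∧ w`, modelled concretely as the antisymmetric array
`(i,j) ↦ vᵢwⱼ - vⱼwᵢ` (a faithful model of the second exterior power `Λ²(ℝ⁴)`). -/
def wedge (v w : Fin 4 → ℝ) : Fin 4 → Fin 4 → ℝ :=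
  fun i j => v i * w j - v j * w i

/-- Partial derivative of a two-parameter map with respect to the first variable. -/
def pds {E : Type*} [NormedAddCommGroup E] [NormedSpace ℝ E]
    (x : ℝ → ℝ → E) (s t : ℝ) : E :=
  deriv (fun u => x u t) s

/-- Partial derivative of a two-parameter map with respect to the second variable. -/
def pdt {E : Type*} [NormedAddCommGroup E] [NormedSpace ℝ E]
    (x : ℝ → ℝ → E) (s t : ℝ) : E :=
  deriv (fun u => x s u) t

/-- `m²(s,t) = -B(α'(s), β'(t))`, the conformal factor of the induced metric
`-m²(ds⊗dt + dt⊗ds)` of the minimal Lorentzian surface `x(s,t) = α(s) + β(t)`. -/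
def msq (α β : ℝ → Fin 4 → ℝ) (s t : ℝ) : ℝ :=
  -B4 (deriv α s) (deriv β t)

/-- `η₁ = h(∂s,∂s)`: the component of `x_{ss} = α''` orthogonal to the tangent
plane `span{α'(s), β'(t)}`. -/
def eta1 (α β : ℝ → Fin 4 → ℝ) (s t : ℝ) : Fin 4 → ℝ :=
  deriv (deriv α) s
    - (B4 (deriv (deriv α) s) (deriv β t) / B4 (deriv α s) (deriv β t)) • deriv α s

/-- `η₂ = h(∂t,∂t)`: the component of `x_{tt} = β''` orthogonal to the tangent
plane `span{α'(s), β'(t)}`. -/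
def eta2 (α β : ℝ → Fin 4 → ℝ) (s t : ℝ) : Fin 4 → ℝ :=
  deriv (deriv β) t
    - (B4 (deriv (deriv β) t) (deriv α s) / B4 (deriv α s) (deriv β t)) • deriv β t

/-- The Gauss map `ν = (1/m²)·(α'(s) ∧ β'(t))`, valued in (a model of) `Λ²(ℝ⁴)`. -/
def gaussMap (α β : ℝ → Fin 4 → ℝ) (s t : ℝ) : Fin 4 → Fin 4 → ℝ :=
  (1 / msq α β s t) • wedge (deriv α s) (deriv β t)

/-- The Laplace–Beltrami operator of the induced metric `-m²(ds⊗dt + dt⊗ds)`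
(with the sign convention of the paper) acting on `Λ²(ℝ⁴)`-valued maps:
`Δξ = (2/m²)·∂²ξ/∂s∂t`. -/
def lap (α β : ℝ → Fin 4 → ℝ) (ξ : ℝ → ℝ → (Fin 4 → Fin 4 → ℝ)) (s t : ℝ) :
    Fin 4 → Fin 4 → ℝ :=
  (2 / msq α β s t) • pds (pdt ξ) s t

def hatOp (C : Fin 4 → Fin 4 → ℝ) (v : Fin 4 → ℝ) : Fin 4 → ℝ :=
  fun i => -(C i 0 * v 0) + C i 1 * v 1 + C i 2 * v 2 + C i 3 * v 3

lemma B4_comm (v w : Fin 4 → ℝ) : B4 v w = B4 w v := by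
  simp only [B4]; ring

lemma B4_sub_left (v w z : Fin 4 → ℝ) (c : ℝ) : B4 (v - c • w) z = B4 v z - c * B4 w z := by
  simp only [B4, Pi.sub_apply, Pi.smul_apply, smul_eq_mul]; ring

lemma B4_sub_right (v w z : Fin 4 → ℝ) (c : ℝ) : B4 z (v - c • w) = B4 z v - c * B4 z w := by
  simp only [B4, Pi.sub_apply, Pi.smul_apply, smul_eq_mul]; ring

lemma hatOp_wedge (x y a b v : Fin 4 → ℝ) (k l : ℝ) (i : Fin 4) :
    hatOp (k • wedge x y + l • wedge a b) v i =
      k * (x i * B4 y v - y i * B4 x v) + l * (a i * B4 b v - b i * B4 a v) := by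
  simp only [hatOp, wedge, B4, Pi.add_apply, Pi.smul_apply, smul_eq_mul]; ring

lemma null_orth (x a b : Fin 4 → ℝ) (ha : B4 a a = 0) (hb : B4 b b = 0) (hab : B4 a b < 0)
    (hxa : B4 x a = 0) (hxb : B4 x b = 0) (hx : B4 x x = 0) : x = 0 := by
  obtain ⟨u, hu⟩ : ∃ u, u = a + b := ⟨_, rfl⟩
  have huu : B4 u u < 0 := by
    have : B4 u u = B4 a a + 2 * B4 a b + B4 b b := by
      subst hu; simp only [B4, Pi.add_apply]; ring
    rw [this]; linarith
  have hxu : B4 x u = 0 := by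
    have : B4 x u = B4 x a + B4 x b := by
      subst hu; simp only [B4, Pi.add_apply]; ring
    rw [this]; linarith
  simp only [B4] at huu hxu hx
  have e1 : x 0 * u 0 = x 1 * u 1 + x 2 * u 2 + x 3 * u 3 := by linarith
  have e2 : x 1 * x 1 + x 2 * x 2 + x 3 * x 3 = x 0 * x 0 := by linarith
  have cs : (x 1 * u 1 + x 2 * u 2 + x 3 * u 3)^2 ≤
      (x 1 * x 1 + x 2 * x 2 + x 3 * x 3) * (u 1 * u 1 + u 2 * u 2 + u 3 * u 3) := by
    nlinarith [sq_nonneg (x 1 * u 2 - x 2 * u 1), sq_nonneg (x 1 * u 3 - x 3 * u 1),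
      sq_nonneg (x 2 * u 3 - x 3 * u 2)]
  rw [← e1, e2] at cs
  have h0 : x 0 = 0 := by
    by_contra h
    have : 0 < x 0 * x 0 := mul_self_pos.2 h
    nlinarith
  rw [h0] at e2
  have h1 : x 1 = 0 := by nlinarith [sq_nonneg (x 1), sq_nonneg (x 2), sq_nonneg (x 3)]
  have h2 : x 2 = 0 := by nlinarith [sq_nonneg (x 1), sq_nonneg (x 2), sq_nonneg (x 3)]
  have h3 : x 3 = 0 := by nlinarith [sq_nonneg (x 1), sq_nonneg (x 2), sq_nonneg (x 3)]
  funext i; fin_cases i <;> assumption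

lemma hasDerivAt_B4 {a b : ℝ → Fin 4 → ℝ} {a' b' : Fin 4 → ℝ} {s : ℝ}
    (ha : HasDerivAt a a' s) (hb : HasDerivAt b b' s) :
    HasDerivAt (fun u => B4 (a u) (b u)) (B4 a' (b s) + B4 (a s) b') s := by
  have ha := hasDerivAt_pi.1 ha
  have hb := hasDerivAt_pi.1 hb
  simp only [B4]
  refine ((((((ha 0).mul (hb 0)).neg).add ((ha 1).mul (hb 1))).add
    ((ha 2).mul (hb 2))).add ((ha 3).mul (hb 3))).congr_deriv ?_
  ring

def Gt (a b b' : Fin 4 → ℝ) : Fin 4 → Fin 4 → ℝ :=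
  fun i j => -(a i * b' j - a j * b' i) / B4 a b + (a i * b j - a j * b i) * B4 a b' / B4 a b ^ 2

lemma gm_dt (a : Fin 4 → ℝ) {b : ℝ → Fin 4 → ℝ} {b' : Fin 4 → ℝ} {t : ℝ}
    (hb : HasDerivAt b b' t) (hg : B4 a (b t) ≠ 0) :
    HasDerivAt (fun u => (1 / (-B4 a (b u))) • wedge a (b u)) (Gt a (b t) b') t := by
  have hB := hasDerivAt_B4 (hasDerivAt_const t a) hb
  have hb := hasDerivAt_pi.1 hb
  refine hasDerivAt_pi.2 fun i => hasDerivAt_pi.2 fun j => ?_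
  simp only [Pi.smul_apply, smul_eq_mul, wedge]
  have h := ((hasDerivAt_const t (1:ℝ)).div hB.neg (neg_ne_zero.2 hg)).mul
    (((hb j).const_mul (a i)).sub ((hb i).const_mul (a j)))
  refine h.congr_deriv ?_
  have z : B4 0 (b t) = 0 := by simp [B4]
  simp only [Gt, z, Pi.neg_apply, Pi.div_apply, Pi.sub_apply]
  field_simp
  ring

lemma gm_dst {a : ℝ → Fin 4 → ℝ} {a' : Fin 4 → ℝ} (b b' : Fin 4 → ℝ) {s : ℝ}
    (ha : HasDerivAt a a' s) (hg : B4 (a s) b ≠ 0) :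
    HasDerivAt (fun u => Gt (a u) b b')
      (fun i j => -(a' i * b' j - a' j * b' i) / B4 (a s) b
        + (a s i * b' j - a s j * b' i) * B4 a' b / B4 (a s) b ^ 2
        + (a' i * b j - a' j * b i) * B4 (a s) b' / B4 (a s) b ^ 2
        + (a s i * b j - a s j * b i) * (B4 a' b' / B4 (a s) b ^ 2
          - 2 * B4 (a s) b' * B4 a' b / B4 (a s) b ^ 3)) s := by
  have hB := hasDerivAt_B4 ha (hasDerivAt_const s b)
  have hB' := hasDerivAt_B4 ha (hasDerivAt_const s b')
  have ha := hasDerivAt_pi.1 ha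
  refine hasDerivAt_pi.2 fun i => hasDerivAt_pi.2 fun j => ?_
  simp only [Gt]
  have h := ((((ha i).mul_const (b' j)).sub ((ha j).mul_const (b' i))).neg.div hB hg).add
    (((((ha i).mul_const (b j)).sub ((ha j).mul_const (b i))).mul hB').div (hB.pow 2)
      (pow_ne_zero 2 hg))
  refine h.congr_deriv ?_
  have z : ∀ v : Fin 4 → ℝ, B4 v 0 = 0 := by intro v; simp [B4]
  simp only [z, Pi.neg_apply, Pi.div_apply, Pi.sub_apply, Pi.mul_apply, Pi.pow_apply]
  field_simp
  ring

lemma hasDerivAt_hatOp (C : Fin 4 → Fin 4 → ℝ) {a : ℝ → Fin 4 → ℝ} {a' : Fin 4 → ℝ} {s : ℝ}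
    (ha : HasDerivAt a a' s) (i : Fin 4) :
    HasDerivAt (fun u => hatOp C (a u) i) (hatOp C a' i) s := by
  have ha := hasDerivAt_pi.1 ha
  exact (((((ha 0).const_mul (C i 0)).neg).add ((ha 1).const_mul (C i 1))).add
    ((ha 2).const_mul (C i 2))).add ((ha 3).const_mul (C i 3))

lemma smooth_derivs {I : Set ℝ} (hI : IsOpen I) {α : ℝ → Fin 4 → ℝ}
    (hα : ContDiffOn ℝ (⊤ : ℕ∞) α I) {s : ℝ} (hs : s ∈ I) :
    HasDerivAt (deriv α) (deriv (deriv α) s) s := by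
  have h : ContDiffOn ℝ 1 (deriv α) I :=
    hα.deriv_of_isOpen hI (by norm_cast)
  exact ((h.differentiableOn (by norm_num)).differentiableAt (hI.mem_nhds hs)).hasDerivAt

lemma null_deriv {I : Set ℝ} (hI : IsOpen I) {α : ℝ → Fin 4 → ℝ}
    (hα : ContDiffOn ℝ (⊤ : ℕ∞) α I) (hn : ∀ s ∈ I, B4 (deriv α s) (deriv α s) = 0)
    {s : ℝ} (hs : s ∈ I) : B4 (deriv (deriv α) s) (deriv α s) = 0 := by
  have h := smooth_derivs hI hα hs
  have h1 := hasDerivAt_B4 h h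
  have h2 : HasDerivAt (fun u => B4 (deriv α u) (deriv α u)) 0 s :=
    (hasDerivAt_const s (0:ℝ)).congr_of_eventuallyEq
      (by filter_upwards [hI.mem_nhds hs] with u hu using hn u hu)
  have := h1.unique h2
  rw [B4_comm (deriv α s)] at this
  linarith

lemma gauss_formula (I₁ I₂ : Set ℝ) (hI₁ : IsOpen I₁) (hI₂ : IsOpen I₂)
    (α β : ℝ → Fin 4 → ℝ)
    (hα : ContDiffOn ℝ (⊤ : ℕ∞) α I₁) (hβ : ContDiffOn ℝ (⊤ : ℕ∞) β I₂)
    (hneg : ∀ s ∈ I₁, ∀ t ∈ I₂, B4 (deriv α s) (deriv β t) < 0)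
    {s t : ℝ} (hs : s ∈ I₁) (ht : t ∈ I₂) :
    pds (pdt (gaussMap α β)) s t =
      (1 / msq α β s t) • wedge (eta1 α β s t) (eta2 α β s t)
      + (B4 (eta1 α β s t) (eta2 α β s t) / msq α β s t) • gaussMap α β s t := by
  have hβ' := smooth_derivs hI₂ hβ ht
  have hα' := smooth_derivs hI₁ hα hs
  have e : (fun u => pdt (gaussMap α β) u t) =ᶠ[nhds s]
      fun u => Gt (deriv α u) (deriv β t) (deriv (deriv β) t) := by
    filter_upwards [hI₁.mem_nhds hs] with u hu
    exact (gm_dt (deriv α u) hβ' (hneg u hu t ht).ne).deriv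
  have hg := (hneg s hs t ht).ne
  unfold pds
  rw [e.deriv_eq, (gm_dst (deriv β t) (deriv (deriv β) t) hα' hg).deriv]
  funext i j
  simp only [eta1, eta2, B4_sub_left, B4_sub_right, gaussMap, msq, wedge, Pi.add_apply,
    Pi.smul_apply, smul_eq_mul, Pi.sub_apply]
  rw [B4_comm (deriv (deriv β) t) (deriv α s)]
  generalize B4 (deriv α s) (deriv β t) = g at *
  field_simp
  ring

lemma dep_of_null {x y a b : Fin 4 → ℝ} (ha : B4 a a = 0) (hb : B4 b b = 0) (hab : B4 a b < 0)
    (hxa : B4 x a = 0) (hxb : B4 x b = 0) (p q : ℝ)  (hq : q ≠ 0)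
    (h : ∀ i, p * x i = q * B4 x x * y i) : wedge x y = 0 := by
  by_cases hx : B4 x x = 0
  · have := null_orth x a b ha hb hab hxa hxb hx
    subst this
    funext i j; simp [wedge]
  · funext i j
    have hne : q * B4 x x ≠ 0 := mul_ne_zero hq hx
    have : (q * B4 x x) * wedge x y i j = 0 := by
      simp only [wedge]
      linear_combination (-x i) * h j + x j * h i
    simpa [hne] using this

/-- Proposition 3.3: if a minimal Lorentzian surface has pointwise 1-type Gauss map,
i.e. `Δν = f·(ν + C)` for a smooth function `f` and a constant bivector `C`, then
`η₁ ∧ η₂ ≡ 0` and `∂²ν/∂s∂t` is everywhere a scalar multiple of `ν`: the Gauss map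
is of pointwise 1-type of the first kind (`C` may be taken to be `0`). -/
theorem pointwise_one_type_is_first_kind
    (I₁ I₂ : Set ℝ) (hI₁ : IsOpen I₁) (hI₂ : IsOpen I₂)
    (hI₁' : I₁.OrdConnected) (hI₂' : I₂.OrdConnected)
    (α β : ℝ → Fin 4 → ℝ)
    (hα : ContDiffOn ℝ (⊤ : ℕ∞) α I₁) (hβ : ContDiffOn ℝ (⊤ : ℕ∞) β I₂)
    (hαnull : ∀ s ∈ I₁, B4 (deriv α s) (deriv α s) = 0)
    (hβnull : ∀ t ∈ I₂, B4 (deriv β t) (deriv β t) = 0)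
    (hneg : ∀ s ∈ I₁, ∀ t ∈ I₂, B4 (deriv α s) (deriv β t) < 0)
    (f : ℝ → ℝ → ℝ) (hf : ContDiffOn ℝ (⊤ : ℕ∞) (Function.uncurry f) (I₁ ×ˢ I₂))
    (C : Fin 4 → Fin 4 → ℝ) (hC : ∀ i j, C i j = -C j i)
    (hmain : ∀ s ∈ I₁, ∀ t ∈ I₂,
      lap α β (gaussMap α β) s t = f s t • (gaussMap α β s t + C)) :
    (∀ s ∈ I₁, ∀ t ∈ I₂, wedge (eta1 α β s t) (eta2 α β s t) = 0) ∧
    (∀ s ∈ I₁, ∀ t ∈ I₂,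
      ∃ c : ℝ, pds (pdt (gaussMap α β)) s t = c • gaussMap α β s t) := by
  have orth : ∀ s ∈ I₁, ∀ t ∈ I₂,
      B4 (eta1 α β s t) (deriv α s) = 0 ∧ B4 (eta1 α β s t) (deriv β t) = 0 ∧
      B4 (eta2 α β s t) (deriv α s) = 0 ∧ B4 (eta2 α β s t) (deriv β t) = 0 := by
    intro s hs t ht
    have hg := (hneg s hs t ht).ne
    have h1 := null_deriv hI₁ hα hαnull hs
    have h2 := null_deriv hI₂ hβ hβnull ht
    simp only [eta1, eta2, B4_sub_left, h1, h2, hαnull s hs, hβnull t ht,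
      B4_comm (deriv β t) (deriv α s)]
    refine ⟨by ring, ?_, ?_, by ring⟩ <;> field_simp <;> ring
  have key : ∀ s ∈ I₁, ∀ t ∈ I₂, wedge (eta1 α β s t) (eta2 α β s t) = 0 := by
    intro s hs t ht
    -- the constant bivector at nearby points
    have hE : ∀ u ∈ I₁, ∃ k l : ℝ, k ≠ 0 ∧
        f u t • C = k • wedge (eta1 α β u t) (eta2 α β u t)
          + l • wedge (deriv α u) (deriv β t) := by
      intro u hu
      have hm := hmain u hu t ht
      have hg := (hneg u hu t ht).ne
      have hms : msq α β u t ≠ 0 := by simpa [msq] using hg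
      rw [lap, gauss_formula I₁ I₂ hI₁ hI₂ α β hα hβ hneg hu ht] at hm
      refine ⟨2 / msq α β u t * (1 / msq α β u t),
        2 / msq α β u t * (B4 (eta1 α β u t) (eta2 α β u t) / msq α β u t) * (1 / msq α β u t)
          - f u t * (1 / msq α β u t), by positivity, ?_⟩
      funext i j
      have := congrFun (congrFun hm i) j
      simp only [gaussMap, Pi.add_apply, Pi.smul_apply, smul_eq_mul] at this ⊢
      linear_combination -this
    have hat_smul : ∀ (c : ℝ) (v : Fin 4 → ℝ) (i : Fin 4),
        hatOp (c • C) v i = c * hatOp C v i := by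
      intro c v i; simp only [hatOp, Pi.smul_apply, smul_eq_mul]; ring
    obtain ⟨o1, o2, o3, o4⟩ := orth s hs t ht
    have hg := hneg s hs t ht
    obtain ⟨k, l, hk, hkl⟩ := hE s hs
    have hx : ∀ i, f s t * hatOp C (eta1 α β s t) i =
        k * (eta1 α β s t i * B4 (eta2 α β s t) (eta1 α β s t)
          - eta2 α β s t i * B4 (eta1 α β s t) (eta1 α β s t)) := by
      intro i
      rw [← hat_smul, hkl, hatOp_wedge, B4_comm (deriv α s), B4_comm (deriv β t), o1, o2]
      ring
    by_cases hf0 : f s t = 0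
    · refine dep_of_null (hαnull s hs) (hβnull t ht) hg o1 o2
        (k * B4 (eta2 α β s t) (eta1 α β s t)) k hk fun i => ?_
      have := hx i
      rw [hf0] at this
      linear_combination -this
    · have hcont : ContinuousAt (fun u => f u t) s := by
        have h1 : ContinuousAt (Function.uncurry f) (s, t) :=
          hf.continuousOn.continuousAt ((hI₁.prod hI₂).mem_nhds ⟨hs, ht⟩)
        exact ContinuousAt.comp (f := fun u : ℝ => (u, t)) (g := Function.uncurry f) h1
          (by fun_prop)
      have hEa : ∀ u ∈ I₁, ∃ l : ℝ, ∀ i, f u t * hatOp C (deriv α u) i = l * deriv α u i := by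
        intro u hu
        obtain ⟨k, l, -, hkl⟩ := hE u hu
        obtain ⟨o1, o2, o3, o4⟩ := orth u hu t ht
        refine ⟨l * B4 (deriv β t) (deriv α u), fun i => ?_⟩
        rw [← hat_smul, hkl, hatOp_wedge, o1, o3, hαnull u hu]
        ring
      obtain ⟨μ, hμ⟩ : ∃ μ : ℝ, ∀ i, hatOp C (deriv α s) i = μ * deriv α s i := by
        obtain ⟨l, hl⟩ := hEa s hs
        refine ⟨l / f s t, fun i => ?_⟩
        have := hl i
        field_simp
        linarith
      have hα' := smooth_derivs hI₁ hα hs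
      -- differentiate `Ĉ a ∧ a = 0`
      have hd : ∀ i j, hatOp C (deriv (deriv α) s) i * deriv α s j
          + hatOp C (deriv α s) i * deriv (deriv α) s j
          - (hatOp C (deriv (deriv α) s) j * deriv α s i
          + hatOp C (deriv α s) j * deriv (deriv α) s i) = 0 := by
        intro i j
        have hp := hasDerivAt_pi.1 hα'
        have h1 := ((hasDerivAt_hatOp C hα' i).mul (hp j)).sub
          ((hasDerivAt_hatOp C hα' j).mul (hp i))
        have h2 := (hasDerivAt_const s (0:ℝ)).congr_of_eventuallyEq
          (f₁ := fun u => hatOp C (deriv α u) i * deriv α u j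
            - hatOp C (deriv α u) j * deriv α u i) (by
            filter_upwards [hI₁.mem_nhds hs, hcont.eventually_ne hf0] with u hu hfu
            obtain ⟨l, hl⟩ := hEa u hu
            have : f u t * (hatOp C (deriv α u) i * deriv α u j
              - hatOp C (deriv α u) j * deriv α u i) = 0 := by
              linear_combination deriv α u j * hl i - deriv α u i * hl j
            simpa [hfu] using this)
        exact h1.unique h2
      -- `w = Ĉ η₁ - μ η₁`
      obtain ⟨w, hw⟩ : ∃ w : Fin 4 → ℝ,
        w = fun i => hatOp C (eta1 α β s t) i - μ * eta1 α β s t i := ⟨_, rfl⟩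
      have hwa : ∀ i j, w i * deriv α s j = w j * deriv α s i := by
        intro i j
        have hlin : ∀ i, hatOp C (eta1 α β s t) i = hatOp C (deriv (deriv α) s) i
          - (B4 (deriv (deriv α) s) (deriv β t) / B4 (deriv α s) (deriv β t))
            * hatOp C (deriv α s) i := by
          intro i
          simp only [hatOp, eta1, Pi.sub_apply, Pi.smul_apply, smul_eq_mul]; ring
        have := hd i j
        rw [hμ i, hμ j] at this
        subst hw
        simp only [hlin, hμ]
        simp only [eta1, Pi.sub_apply, Pi.smul_apply, smul_eq_mul]
        linear_combination this
      have hfw : ∀ i, f s t * w i = k * (eta1 α β s t i * B4 (eta2 α β s t) (eta1 α β s t)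
          - eta2 α β s t i * B4 (eta1 α β s t) (eta1 α β s t))
          - f s t * μ * eta1 α β s t i := by
        intro i; subst hw
        linear_combination hx i
      have hwb : B4 w (deriv β t) = 0 := by
        have : f s t * B4 w (deriv β t) = 0 := by
          have e : f s t * B4 w (deriv β t) =
            -((f s t * w 0) * deriv β t 0) + (f s t * w 1) * deriv β t 1
              + (f s t * w 2) * deriv β t 2 + (f s t * w 3) * deriv β t 3 := by
            simp only [B4]; ring
          rw [e, hfw, hfw, hfw, hfw]
          generalize B4 (eta2 α β s t) (eta1 α β s t) = P at *
          generalize B4 (eta1 α β s t) (eta1 α β s t) = Q at *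
          simp only [B4] at o2 o4
          linear_combination (k * P - f s t * μ) * o2 - k * Q * o4
        simpa [hf0] using this
      have hw0 : ∀ i, w i = 0 := by
        intro i
        have : w i * B4 (deriv α s) (deriv β t) = deriv α s i * B4 w (deriv β t) := by
          simp only [B4]
          linear_combination -deriv β t 0 * hwa i 0 + deriv β t 1 * hwa i 1
            + deriv β t 2 * hwa i 2 + deriv β t 3 * hwa i 3
        rw [hwb, mul_zero] at this
        simpa [hg.ne] using this
      refine dep_of_null (hαnull s hs) (hβnull t ht) hg o1 o2
        (k * B4 (eta2 α β s t) (eta1 α β s t) - f s t * μ) k hk fun i => ?_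
      have := hfw i
      rw [hw0] at this
      linear_combination -this
  refine ⟨key, fun s hs t ht => ⟨B4 (eta1 α β s t) (eta2 α β s t) / msq α β s t, ?_⟩⟩
  rw [gauss_formula I₁ I₂ hI₁ hI₂ α β hα hβ hneg hs ht, key s hs t ht, smul_zero, zero_add]
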